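/- arXiv:2306.03801 — 3 statements merged into one kernel-verified Lean document; each statement's English description precedes it below -/
import Mathlib

section
/- Let μ be a finite signed Borel measure on ℝⁿ with total mass zero whose Jordan decomposition is given by μ⁺ = Σ_{i=1}^{k} δ_{x_i} and μ⁻ = Σ_{i=1}^{k} δ_{y_i}, where X = (x_1, …, x_k) and Y = (y_1, …, y_k) are finite lists of points of ℝⁿ and δ_x denotes the Dirac measure at x. Then for every p ∈ [1, ∞], the Kantorovich–Rubinstein norm satisfies ‖μ‖_p^KR = min { Σ_{i=1}^{k} ‖x_i − y_{γ(i)}‖_p : γ a permutation of {1, …, k} }. -/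
open MeasureTheory

noncomputable def lpnorm (p : ENNReal) {n : ℕ} (v : Fin n → ℝ) : ℝ :=
  ‖(WithLp.equiv p (Fin n → ℝ)).symm v‖

noncomputable def KRgen {E : Type*} [MeasurableSpace E] (cost : E → E → ENNReal)
    (μ : SignedMeasure E) : ENNReal :=
  ⨅ (ψ : Measure (E × E)) (_ : ψ.map Prod.fst = μ.toJordanDecomposition.posPart ∧
      ψ.map Prod.snd = μ.toJordanDecomposition.negPart),
    ∫⁻ w, cost w.1 w.2 ∂ψ

noncomputable def KRnorm (p : ENNReal) {n : ℕ} (μ : SignedMeasure (Fin n → ℝ)) : ENNReal :=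
  KRgen (fun x y => ENNReal.ofReal (lpnorm p (x - y))) μ

noncomputable def KRnormR (μ : SignedMeasure ℝ) : ENNReal :=
  KRgen (fun x y => ENNReal.ofReal |x - y|) μ

/-!
A bijection `γ` between the two lists gives the coupling `∑ i, δ_(X i, Y (γ i))`, whose cost is the
cost of the matching. Conversely, a coupling is carried by the finitely many pairs `(X i, Y j)`, and
the masses of these pairs form a doubly stochastic matrix, once the mass at a repeated point has
been shared equally among its occurrences. By Birkhoff's theorem this matrix is an average of
permutation matrices, so the cost of the coupling is an average of costs of matchings and is at
least the smallest of them.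
-/

open Finset
open scoped ENNReal

section Birkhoff

variable {ι : Type*} [Fintype ι] [DecidableEq ι]

lemma map_toReal_mem_doublyStochastic {M : Matrix ι ι ℝ≥0∞}
    (hM : M ∈ doublyStochastic ℝ≥0∞ ι) : M.map ENNReal.toReal ∈ doublyStochastic ℝ ι := by
  have hfin (i j : ι) : M i j ≠ ∞ := ne_top_of_le_ne_top ENNReal.one_ne_top
    (le_one_of_mem_doublyStochastic hM)
  refine mem_doublyStochastic_iff_sum.2 ⟨fun i j => ENNReal.toReal_nonneg, fun i => ?_, fun j => ?_⟩
  · simp only [Matrix.map_apply]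
    rw [← ENNReal.toReal_sum fun j _ => hfin i j, sum_row_of_mem_doublyStochastic hM,
      ENNReal.toReal_one]
  · simp only [Matrix.map_apply]
    rw [← ENNReal.toReal_sum fun i _ => hfin i j, sum_col_of_mem_doublyStochastic hM,
      ENNReal.toReal_one]

lemma exists_eq_sum_perm_of_mem_doublyStochastic_ennreal {M : Matrix ι ι ℝ≥0∞}
    (hM : M ∈ doublyStochastic ℝ≥0∞ ι) :
    ∃ w : Equiv.Perm ι → ℝ≥0∞, ∑ σ, w σ = 1 ∧ ∑ σ, w σ • σ.permMatrix ℝ≥0∞ = M := by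
  obtain ⟨w, hw_nonneg, hw_sum, hwM⟩ :=
    exists_eq_sum_perm_of_mem_doublyStochastic (map_toReal_mem_doublyStochastic hM)
  refine ⟨fun σ => ENNReal.ofReal (w σ), ?_, ?_⟩
  · rw [← ENNReal.ofReal_sum_of_nonneg fun σ _ => hw_nonneg σ, hw_sum, ENNReal.ofReal_one]
  · ext i j
    have hfin : M i j ≠ ∞ := ne_top_of_le_ne_top ENNReal.one_ne_top
      (le_one_of_mem_doublyStochastic hM)
    have hij : ∑ σ, w σ * σ.permMatrix ℝ i j = (M i j).toReal := by
      simpa only [Matrix.sum_apply, Matrix.smul_apply, smul_eq_mul, Matrix.map_apply]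
        using congr_fun₂ hwM i j
    rw [← ENNReal.ofReal_toReal hfin, ← hij, ENNReal.ofReal_sum_of_nonneg fun σ _ =>
      mul_nonneg (hw_nonneg σ) (by simp only [PEquiv.toMatrix_apply]; positivity), Matrix.sum_apply]
    refine sum_congr rfl fun σ _ => ?_
    by_cases h : σ i = j <;> simp [PEquiv.toMatrix_apply, Equiv.toPEquiv_apply, h]

lemma sum_sum_mul_sum_smul_permMatrix {R : Type*} [CommSemiring R]
    (w : Equiv.Perm ι → R) (c : ι → ι → R) :
    ∑ i, ∑ j, c i j * (∑ σ, w σ • σ.permMatrix R) i j = ∑ σ, w σ * ∑ i, c i (σ i) := by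
  simp only [Matrix.sum_apply, Matrix.smul_apply, smul_eq_mul, mul_sum]
  rw [sum_congr rfl fun i _ => sum_comm, sum_comm]
  refine sum_congr rfl fun σ _ => sum_congr rfl fun i _ => ?_
  simp [PEquiv.toMatrix_apply, Equiv.toPEquiv_apply, mul_comm]

lemma iInf_perm_sum_le_of_mem_doublyStochastic {M : Matrix ι ι ℝ≥0∞}
    (hM : M ∈ doublyStochastic ℝ≥0∞ ι) (c : ι → ι → ℝ≥0∞) :
    ⨅ σ : Equiv.Perm ι, ∑ i, c i (σ i) ≤ ∑ i, ∑ j, c i j * M i j := by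
  obtain ⟨w, hw, rfl⟩ := exists_eq_sum_perm_of_mem_doublyStochastic_ennreal hM
  calc ⨅ σ : Equiv.Perm ι, ∑ i, c i (σ i)
      = ∑ σ, w σ * ⨅ τ : Equiv.Perm ι, ∑ i, c i (τ i) := by rw [← sum_mul, hw, one_mul]
    _ ≤ ∑ σ, w σ * ∑ i, c i (σ i) := by gcongr with σ; exact iInf_le _ σ
    _ = _ := (sum_sum_mul_sum_smul_permMatrix w c).symm

end Birkhoff

section FiberWeight

variable {ι E : Type*}

/-- The share of the `i`-th index in a unit mass located at a point: the unit mass at `x` is split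
equally among all `i` with `X i = x`. This lets a list of points with repetitions be treated as if
its points were distinct. Fibers are meant to be finite: `ncard` is `0` on an infinite one. -/
noncomputable def fiberWeight (X : ι → E) (i : ι) : E → ℝ≥0∞ :=
  Set.indicator {X i} fun x => ((X ⁻¹' {x}).ncard : ℝ≥0∞)⁻¹

lemma fiberWeight_apply_comm (X : ι → E) (i j : ι) :
    fiberWeight X i (X j) = fiberWeight X j (X i) := by
  by_cases h : X i = X j
  · simp [fiberWeight, h]
  · simp [fiberWeight, h, Ne.symm h]

lemma fiberWeight_eq_zero {X : ι → E} {i : ι} {x : E} (h : x ≠ X i) : fiberWeight X i x = 0 :=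
  Set.indicator_of_notMem (Set.notMem_singleton_iff.2 h) _

lemma mul_fiberWeight_mul_fiberWeight {κ F : Type*} (c : E → F → ℝ≥0∞) (X : ι → E) (Y : κ → F)
    (i : ι) (j : κ) (x : E) (y : F) :
    c (X i) (Y j) * (fiberWeight X i x * fiberWeight Y j y) =
      c x y * (fiberWeight X i x * fiberWeight Y j y) := by
  by_cases hx : x = X i
  · by_cases hy : y = Y j
    · rw [hx, hy]
    · simp [fiberWeight_eq_zero hy]
  · simp [fiberWeight_eq_zero hx]

lemma sum_fiberWeight [Fintype ι] {X : ι → E} {x : E} (hx : x ∈ Set.range X) :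
    ∑ i, fiberWeight X i x = 1 := by
  classical
  obtain ⟨j, rfl⟩ := hx
  have hcard : (X ⁻¹' {X j}).ncard = #{i | X j = X i} := by
    rw [← Set.ncard_coe_finset]
    congr 1
    ext i
    simp [eq_comm]
  have hpos : #{i | X j = X i} ≠ 0 := (card_pos.2 ⟨j, by simp⟩).ne'
  simp only [fiberWeight, Set.indicator_apply, Set.mem_singleton_iff, hcard]
  rw [← sum_filter, sum_const, nsmul_eq_mul]
  exact ENNReal.mul_inv_cancel (Nat.cast_ne_zero.2 hpos) (ENNReal.natCast_ne_top _)

variable [MeasurableSpace E] [MeasurableSingletonClass E]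

lemma measurable_fiberWeight (X : ι → E) (i : ι) : Measurable (fiberWeight X i) := by
  have hconst : fiberWeight X i =
      Set.indicator {X i} fun _ => ((X ⁻¹' {X i}).ncard : ℝ≥0∞)⁻¹ :=
    Set.indicator_congr fun x hx => by rw [Set.mem_singleton_iff.1 hx]
  rw [hconst]
  exact measurable_const.indicator (measurableSet_singleton _)

variable [Fintype ι]

-- Symmetry in the two indices turns the integral into the sum of all shares of the point `X i`.
lemma lintegral_fiberWeight_sum_dirac (X : ι → E) (i : ι) :
    ∫⁻ x, fiberWeight X i x ∂(∑ j, Measure.dirac (X j)) = 1 := by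
  simp only [lintegral_finsetSum_measure, lintegral_dirac, fiberWeight_apply_comm X i]
  exact sum_fiberWeight ⟨i, rfl⟩

lemma ae_mem_range_of_map_eq_sum_dirac {Ω : Type*} [MeasurableSpace Ω] {ν : Measure Ω} {f : Ω → E}
    {X : ι → E} (hf : AEMeasurable f ν) (h : ν.map f = ∑ i, Measure.dirac (X i)) :
    ∀ᵐ ω ∂ν, f ω ∈ Set.range X := by
  refine ae_of_ae_map hf ?_
  rw [h]
  simp [ae_dirac_eq]

end FiberWeight

section CouplingMatrix

variable {ι κ E F : Type*} [MeasurableSpace E] [MeasurableSpace F]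

/-- The mass that a measure `ψ` on `E × F` transports from the `i`-th to the `j`-th point of two
lists `X` and `Y`, where the mass at a repeated point is shared equally among its occurrences. -/
noncomputable def couplingMatrix (X : ι → E) (Y : κ → F) (ψ : Measure (E × F)) : Matrix ι κ ℝ≥0∞ :=
  fun i j => ∫⁻ z, fiberWeight X i z.1 * fiberWeight Y j z.2 ∂ψ

variable [MeasurableSingletonClass E] [MeasurableSingletonClass F] {X : ι → E} {Y : κ → F}
  {ψ : Measure (E × F)}

lemma measurable_fiberWeight_mul_fiberWeight (X : ι → E) (Y : κ → F) (i : ι) (j : κ) :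
    Measurable fun z : E × F => fiberWeight X i z.1 * fiberWeight Y j z.2 :=
  ((measurable_fiberWeight X i).comp measurable_fst).mul
    ((measurable_fiberWeight Y j).comp measurable_snd)

lemma sum_row_couplingMatrix [Fintype ι] [Fintype κ]
    (hfst : ψ.map Prod.fst = ∑ i, Measure.dirac (X i)) (hY : ∀ᵐ z ∂ψ, z.2 ∈ Set.range Y) (i : ι) :
    ∑ j, couplingMatrix X Y ψ i j = 1 := by
  calc ∑ j, couplingMatrix X Y ψ i j
      = ∫⁻ z, ∑ j, fiberWeight X i z.1 * fiberWeight Y j z.2 ∂ψ :=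
        (lintegral_finsetSum _ fun j _ => measurable_fiberWeight_mul_fiberWeight X Y i j).symm
    _ = ∫⁻ z, fiberWeight X i z.1 ∂ψ := lintegral_congr_ae <| by
        filter_upwards [hY] with z hz
        rw [← mul_sum, sum_fiberWeight hz, mul_one]
    _ = ∫⁻ x, fiberWeight X i x ∂ψ.map Prod.fst :=
        (lintegral_map (measurable_fiberWeight X i) measurable_fst).symm
    _ = 1 := by rw [hfst, lintegral_fiberWeight_sum_dirac]

lemma couplingMatrix_map_swap (X : ι → E) (Y : κ → F) (ψ : Measure (E × F)) :
    couplingMatrix Y X (ψ.map Prod.swap) = (couplingMatrix X Y ψ).transpose := by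
  ext j i
  simp only [couplingMatrix, Matrix.transpose_apply]
  rw [lintegral_map (measurable_fiberWeight_mul_fiberWeight Y X j i) measurable_swap]
  simp only [Prod.fst_swap, Prod.snd_swap, mul_comm]

lemma sum_col_couplingMatrix [Fintype ι] [Fintype κ]
    (hX : ∀ᵐ z ∂ψ, z.1 ∈ Set.range X) (hsnd : ψ.map Prod.snd = ∑ j, Measure.dirac (Y j)) (j : κ) :
    ∑ i, couplingMatrix X Y ψ i j = 1 := by
  have hfst : (ψ.map Prod.swap).map Prod.fst = ∑ j, Measure.dirac (Y j) :=
    (Measure.map_map measurable_fst measurable_swap).trans hsnd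
  have hX_swap : ∀ᵐ z ∂ψ.map Prod.swap, z.2 ∈ Set.range X :=
    (ae_map_iff measurable_swap.aemeasurable
      (measurable_snd (Set.finite_range X).measurableSet)).2 hX
  simpa only [couplingMatrix_map_swap, Matrix.transpose_apply]
    using sum_row_couplingMatrix hfst hX_swap j

lemma couplingMatrix_mem_doublyStochastic [Fintype ι] [DecidableEq ι] {Y : ι → F}
    (hfst : ψ.map Prod.fst = ∑ i, Measure.dirac (X i))
    (hsnd : ψ.map Prod.snd = ∑ i, Measure.dirac (Y i)) :
    couplingMatrix X Y ψ ∈ doublyStochastic ℝ≥0∞ ι :=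
  mem_doublyStochastic_iff_sum.2 ⟨fun _ _ => zero_le,
    sum_row_couplingMatrix hfst
      (ae_mem_range_of_map_eq_sum_dirac measurable_snd.aemeasurable hsnd),
    sum_col_couplingMatrix
      (ae_mem_range_of_map_eq_sum_dirac measurable_fst.aemeasurable hfst) hsnd⟩

lemma sum_sum_mul_couplingMatrix [Fintype ι] [Fintype κ] (c : E → F → ℝ≥0∞)
    (hX : ∀ᵐ z ∂ψ, z.1 ∈ Set.range X) (hY : ∀ᵐ z ∂ψ, z.2 ∈ Set.range Y) :
    ∑ i, ∑ j, c (X i) (Y j) * couplingMatrix X Y ψ i j = ∫⁻ z, c z.1 z.2 ∂ψ := by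
  have hmeas (i : ι) (j : κ) := measurable_fiberWeight_mul_fiberWeight X Y i j
  calc ∑ i, ∑ j, c (X i) (Y j) * couplingMatrix X Y ψ i j
      = ∫⁻ z, ∑ i, ∑ j, c (X i) (Y j) * (fiberWeight X i z.1 * fiberWeight Y j z.2) ∂ψ := by
        rw [lintegral_finsetSum _ fun i _ => Finset.measurable_fun_sum _ fun j _ =>
          (hmeas i j).const_mul _]
        refine sum_congr rfl fun i _ => ?_
        rw [lintegral_finsetSum _ fun j _ => (hmeas i j).const_mul _]
        exact sum_congr rfl fun j _ => (lintegral_const_mul _ (hmeas i j)).symm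
    _ = ∫⁻ z, c z.1 z.2 ∂ψ := lintegral_congr_ae <| by
        filter_upwards [hX, hY] with z hzX hzY
        simp only [mul_fiberWeight_mul_fiberWeight c X Y, ← mul_sum, sum_fiberWeight hzX,
          sum_fiberWeight hzY, mul_one]

end CouplingMatrix

section Matching

variable {ι E F : Type*} [Fintype ι] [MeasurableSpace E] [MeasurableSpace F]

lemma map_sum_dirac (X : ι → E) {f : E → F} (hf : Measurable f) :
    (∑ i, Measure.dirac (X i)).map f = ∑ i, Measure.dirac (f (X i)) := by
  rw [Measure.map_finset_sum' hf.aemeasurable]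
  simp only [Measure.map_dirac' hf]

variable [MeasurableSingletonClass E] [MeasurableSingletonClass F]

lemma iInf_perm_sum_le_lintegral {X : ι → E} {Y : ι → F} {ψ : Measure (E × F)}
    (c : E → F → ℝ≥0∞) (hfst : ψ.map Prod.fst = ∑ i, Measure.dirac (X i))
    (hsnd : ψ.map Prod.snd = ∑ i, Measure.dirac (Y i)) :
    ⨅ γ : Equiv.Perm ι, ∑ i, c (X i) (Y (γ i)) ≤ ∫⁻ z, c z.1 z.2 ∂ψ := by
  classical
  rw [← sum_sum_mul_couplingMatrix c
    (ae_mem_range_of_map_eq_sum_dirac measurable_fst.aemeasurable hfst)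
    (ae_mem_range_of_map_eq_sum_dirac measurable_snd.aemeasurable hsnd)]
  exact iInf_perm_sum_le_of_mem_doublyStochastic (couplingMatrix_mem_doublyStochastic hfst hsnd)
    fun i j => c (X i) (Y j)

theorem kr_norm_eq_min_matching_general (μ : SignedMeasure E) (X Y : ι → E)
    (hpos : μ.toJordanDecomposition.posPart = ∑ i, Measure.dirac (X i))
    (hneg : μ.toJordanDecomposition.negPart = ∑ i, Measure.dirac (Y i))
    (cost : E → E → ℝ≥0∞) :
    KRgen cost μ = ⨅ γ : Equiv.Perm ι, ∑ i, cost (X i) (Y (γ i)) := by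
  rw [KRgen, hpos, hneg]
  refine le_antisymm (le_iInf fun γ => ?_) (le_iInf₂ fun ψ hψ =>
    iInf_perm_sum_le_lintegral cost hψ.1 hψ.2)
  have hfst : (∑ i, Measure.dirac (X i, Y (γ i))).map Prod.fst = ∑ i, Measure.dirac (X i) :=
    map_sum_dirac _ measurable_fst
  have hsnd : (∑ i, Measure.dirac (X i, Y (γ i))).map Prod.snd = ∑ i, Measure.dirac (Y i) :=
    (map_sum_dirac _ measurable_snd).trans (Equiv.sum_comp γ fun i => Measure.dirac (Y i))
  refine (iInf₂_le _ ⟨hfst, hsnd⟩).trans_eq ?_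
  simp only [lintegral_finsetSum_measure, lintegral_dirac]

end Matching

lemma lpnorm_nonneg {p : ℝ≥0∞} (hp : 1 ≤ p) {n : ℕ} (v : Fin n → ℝ) : 0 ≤ lpnorm p v :=
  haveI : Fact (1 ≤ p) := ⟨hp⟩
  norm_nonneg _

/-- For a signed measure on ℝⁿ whose Jordan decomposition consists of two
equinumerous sums of Dirac measures, the Kantorovich–Rubinstein p-norm equals the minimal
cost of a perfect matching between the two point configurations. -/
theorem kr_norm_eq_min_matching {n k : ℕ} (μ : SignedMeasure (Fin n → ℝ))
    (X Y : Fin k → (Fin n → ℝ))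
    (hmass : μ Set.univ = 0)
    (hpos : μ.toJordanDecomposition.posPart = ∑ i, Measure.dirac (X i))
    (hneg : μ.toJordanDecomposition.negPart = ∑ i, Measure.dirac (Y i))
    (p : ENNReal) (hp : 1 ≤ p) :
    KRnorm p μ
      = ⨅ γ : Equiv.Perm (Fin k), ENNReal.ofReal (∑ i, lpnorm p (X i - Y (γ i))) := by
  simpa only [KRnorm, ENNReal.ofReal_sum_of_nonneg fun _ _ => lpnorm_nonneg hp _]
    using kr_norm_eq_min_matching_general μ X Y hpos hneg _
end

section
/- Let Σ be a symmetric positive definite n × n real matrix and let K : ℝⁿ → ℝ be the centered Gaussian density K(x) = exp(−(1/2) xᵀ Σ⁻¹ x) / √((2π)ⁿ det(Σ)). Then for all y, z ∈ ℝⁿ, ‖K_y − K_z‖_{L²} ≤ c · ‖y − z‖_2 with c = ‖Σ⁻¹‖_2^{1/2} / (√2 · π^{n/4} · det(Σ)^{1/4}), where K_y(x) = K(x − y) and ‖Σ⁻¹‖_2 is the operator norm of Σ⁻¹ with respect to the Euclidean norm. -/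
open MeasureTheory

/-!
The product of two translates of a centered Gaussian density `K` is, by the parallelogram law for
the quadratic form `q(x) = xᵀ Σ⁻¹ x`, a multiple of the square of the translate of `K` to the
midpoint: `K_y K_z = exp (-q(y - z) / 4) * K_{(y + z) / 2} ^ 2`. Hence, exactly,
`‖K_y - K_z‖² = 2 (1 - exp (-q(y - z) / 4)) ‖K‖²` in `L²`, where `‖K‖² = 1 / √((4π)ⁿ det Σ)`. The
bounds `1 - exp (-t) ≤ t` and `q(v) ≤ ‖Σ⁻¹‖ ‖v‖²` then give the Lipschitz estimate, even with `4π`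
in place of `π` in the constant.
-/

lemma sqrt_sqrt_pow_mul {a d : ℝ} (ha : 0 ≤ a) (hd : 0 ≤ d) (n : ℕ) :
    √√(a ^ n * d) = a ^ ((n : ℝ) / 4) * d ^ ((1 : ℝ) / 4) := by
  have hquarter : (1 / 2 : ℝ) * (1 / 2) = 1 / 4 := by norm_num
  rw [Real.sqrt_eq_rpow, Real.sqrt_eq_rpow, ← Real.rpow_mul (by positivity), hquarter,
    Real.mul_rpow (by positivity) hd, ← Real.rpow_natCast, ← Real.rpow_mul ha, mul_one_div]

section L2

variable {α E : Type*} [MeasurableSpace α] {μ : Measure α}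

lemma eLpNorm_two_eq_ofReal_sqrt_integral_sq [NormedAddCommGroup E] {f : α → E}
    (hf : MemLp f 2 μ) : eLpNorm f 2 μ = ENNReal.ofReal √(∫ x, ‖f x‖ ^ 2 ∂μ) := by
  rw [hf.eLpNorm_eq_integral_rpow_norm two_ne_zero ENNReal.ofNat_ne_top, Real.sqrt_eq_rpow]
  simp only [ENNReal.toReal_ofNat, Real.rpow_ofNat, one_div]

variable [AddGroup α] [MeasurableAdd α] [μ.IsAddRightInvariant]

lemma memLp_comp_sub_right [NormedAddCommGroup E] {p : ENNReal} {f : α → E} (hf : MemLp f p μ)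
    (y : α) : MemLp (fun x ↦ f (x - y)) p μ :=
  hf.comp_measurePreserving (measurePreserving_sub_right μ y)

lemma integral_sq_translate_sub_translate {f : α → ℝ} (hf : MemLp f 2 μ) (y z : α) :
    ∫ x, (f (x - y) - f (x - z)) ^ 2 ∂μ
      = 2 * (∫ x, f x ^ 2 ∂μ - ∫ x, f (x - y) * f (x - z) ∂μ) := by
  have hy := memLp_comp_sub_right hf y
  have hz := memLp_comp_sub_right hf z
  have hyz : Integrable (fun x ↦ 2 * (f (x - y) * f (x - z))) μ :=
    (hy.integrable_mul hz).const_mul 2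
  have hsub : Integrable (fun x ↦ f (x - y) ^ 2 - 2 * (f (x - y) * f (x - z))) μ :=
    hy.integrable_sq.sub hyz
  calc ∫ x, (f (x - y) - f (x - z)) ^ 2 ∂μ
      = ∫ x, (f (x - y) ^ 2 - 2 * (f (x - y) * f (x - z)) + f (x - z) ^ 2) ∂μ := by
        simp only [sub_sq, mul_assoc]
    _ = ∫ x, f (x - y) ^ 2 ∂μ - 2 * ∫ x, f (x - y) * f (x - z) ∂μ + ∫ x, f (x - z) ^ 2 ∂μ := by
        rw [integral_add hsub hz.integrable_sq, integral_sub hy.integrable_sq hyz,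
          integral_const_mul]
    _ = 2 * (∫ x, f x ^ 2 ∂μ - ∫ x, f (x - y) * f (x - z) ∂μ) := by
        rw [integral_sub_right_eq_self (fun x ↦ f x ^ 2) y,
          integral_sub_right_eq_self (fun x ↦ f x ^ 2) z]
        ring

end L2

section QuadraticForm

open Matrix

variable {ι : Type*} [Fintype ι]

lemma dotProduct_mulVec_parallelogram {R : Type*} [CommRing R] (A : Matrix ι ι R) (u v : ι → R) :
    (u + v) ⬝ᵥ A *ᵥ (u + v) + (u - v) ⬝ᵥ A *ᵥ (u - v)
      = 2 * (u ⬝ᵥ A *ᵥ u + v ⬝ᵥ A *ᵥ v) := by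
  simp only [mulVec_add, mulVec_sub, add_dotProduct, sub_dotProduct, dotProduct_add,
    dotProduct_sub]
  ring

lemma exists_eq_transpose_mul_self_of_posSemidef {A : Matrix ι ι ℝ} (hA : A.PosSemidef) :
    ∃ B : Matrix ι ι ℝ, A = Bᵀ * B := by
  classical
  open scoped MatrixOrder in
  obtain ⟨B, hB⟩ := CStarAlgebra.nonneg_iff_eq_star_mul_self.mp hA.nonneg
  exact ⟨B, by rw [hB, star_eq_conjTranspose, conjTranspose_eq_transpose_of_trivial]⟩

variable [DecidableEq ι]

lemma dotProduct_mulVec_le_norm_toEuclideanCLM (A : Matrix ι ι ℝ) (u v : ι → ℝ) :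
    u ⬝ᵥ A *ᵥ v ≤ ‖toEuclideanCLM (𝕜 := ℝ) A‖ * (‖WithLp.toLp 2 u‖ * ‖WithLp.toLp 2 v‖) :=
  calc u ⬝ᵥ A *ᵥ v
      = inner ℝ (WithLp.toLp 2 u) (toEuclideanCLM (𝕜 := ℝ) A (WithLp.toLp 2 v)) :=
        (inner_toEuclideanCLM A (WithLp.toLp 2 u) (WithLp.toLp 2 v)).symm
    _ ≤ ‖WithLp.toLp 2 u‖ * ‖toEuclideanCLM (𝕜 := ℝ) A (WithLp.toLp 2 v)‖ :=
        real_inner_le_norm _ _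
    _ ≤ ‖WithLp.toLp 2 u‖ * (‖toEuclideanCLM (𝕜 := ℝ) A‖ * ‖WithLp.toLp 2 v‖) := by
        gcongr
        exact ContinuousLinearMap.le_opNorm _ _
    _ = ‖toEuclideanCLM (𝕜 := ℝ) A‖ * (‖WithLp.toLp 2 u‖ * ‖WithLp.toLp 2 v‖) := by ring

end QuadraticForm

section GaussianIntegral

open Matrix

variable {ι : Type*} [Fintype ι]

lemma integral_exp_neg_dotProduct_self :
    ∫ x : ι → ℝ, Real.exp (-(x ⬝ᵥ x)) = √(Real.pi ^ Fintype.card ι) := by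
  calc ∫ x : ι → ℝ, Real.exp (-(x ⬝ᵥ x))
      = ∫ x : ι → ℝ, ∏ i, Real.exp (-1 * x i ^ 2) := by
        simp_rw [← Real.exp_sum, ← Finset.mul_sum, neg_one_mul, pow_two, dotProduct]
    _ = (∫ t : ℝ, Real.exp (-1 * t ^ 2)) ^ Fintype.card ι :=
        integral_fintype_prod_volume_eq_pow fun t : ℝ ↦ Real.exp (-1 * t ^ 2)
    _ = √(Real.pi ^ Fintype.card ι) := by
        rw [integral_gaussian, div_one, eq_comm,
          Real.sqrt_eq_iff_mul_self_eq (by positivity) (by positivity), ← mul_pow,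
          Real.mul_self_sqrt Real.pi_nonneg]

variable [DecidableEq ι]

lemma integral_comp_mulVec {E : Type*} [NormedAddCommGroup E] [NormedSpace ℝ E]
    {B : Matrix ι ι ℝ} (hB : B.det ≠ 0) (f : (ι → ℝ) → E) :
    ∫ x, f (B *ᵥ x) = |B.det|⁻¹ • ∫ x, f x := by
  have hBinj : Function.Injective (toLin' B) :=
    mulVec_injective_of_isUnit (B.isUnit_iff_isUnit_det.mpr hB.isUnit)
  have hBemb : MeasurableEmbedding (toLin' B) :=
    (toLin' B).continuous_of_finiteDimensional.measurableEmbedding hBinj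
  calc ∫ x, f (B *ᵥ x) = ∫ x, f x ∂(volume.map (toLin' B)) := (hBemb.integral_map f).symm
    _ = |B.det|⁻¹ • ∫ x, f x := by
      rw [Real.map_matrix_volume_pi_eq_smul_volume_pi hB, integral_smul_measure,
        ENNReal.toReal_ofReal (abs_nonneg _), abs_inv]

lemma integral_exp_neg_dotProduct_mulVec {A : Matrix ι ι ℝ} (hA : A.PosDef) :
    ∫ x, Real.exp (-(x ⬝ᵥ A *ᵥ x)) = √(Real.pi ^ Fintype.card ι / A.det) := by
  obtain ⟨B, rfl⟩ := exists_eq_transpose_mul_self_of_posSemidef hA.posSemidef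
  have hdet : (Bᵀ * B).det = B.det ^ 2 := by rw [det_mul, det_transpose, pow_two]
  have hB : B.det ≠ 0 := by simpa [hdet] using hA.det_pos.ne'
  have hquad (x : ι → ℝ) : x ⬝ᵥ (Bᵀ * B) *ᵥ x = B *ᵥ x ⬝ᵥ B *ᵥ x := by
    rw [← mulVec_mulVec, dotProduct_mulVec, vecMul_transpose]
  simp_rw [hquad]
  rw [integral_comp_mulVec hB fun x ↦ Real.exp (-(x ⬝ᵥ x)), integral_exp_neg_dotProduct_self, hdet,
    Real.sqrt_div' _ (sq_nonneg _), Real.sqrt_sq_eq_abs, smul_eq_mul, inv_mul_eq_div]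

end GaussianIntegral

section GaussianDensity

open Matrix

variable {ι : Type*} [Fintype ι] [DecidableEq ι] {S : Matrix ι ι ℝ}

/-- The density of the centered Gaussian with covariance matrix `S`; it is meaningful for positive
definite `S` only, since `S⁻¹ = 0` for singular `S`. -/
noncomputable def gaussianDensity (S : Matrix ι ι ℝ) (x : ι → ℝ) : ℝ :=
  Real.exp (-(1 / 2) * (x ⬝ᵥ S⁻¹ *ᵥ x)) / √((2 * Real.pi) ^ Fintype.card ι * S.det)

lemma continuous_gaussianDensity (S : Matrix ι ι ℝ) : Continuous (gaussianDensity S) := by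
  unfold gaussianDensity
  simp only [dotProduct, mulVec]
  fun_prop

lemma gaussianDensity_add_mul_gaussianDensity_sub (S : Matrix ι ι ℝ) (u v : ι → ℝ) :
    gaussianDensity S (u + v) * gaussianDensity S (u - v)
      = Real.exp (-(v ⬝ᵥ S⁻¹ *ᵥ v)) * gaussianDensity S u ^ 2 := by
  simp only [gaussianDensity]
  rw [div_mul_div_comm, ← pow_two √_, div_pow, ← mul_div_assoc, ← Real.exp_add, ← Real.exp_nat_mul,
    ← Real.exp_add]
  congr 2
  push_cast
  linear_combination -(1 / 2) * dotProduct_mulVec_parallelogram S⁻¹ u v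

lemma integral_gaussianDensity_translate_mul_translate (S : Matrix ι ι ℝ) (y z : ι → ℝ) :
    ∫ x, gaussianDensity S (x - y) * gaussianDensity S (x - z)
      = Real.exp (-((y - z) ⬝ᵥ S⁻¹ *ᵥ (y - z)) / 4) * ∫ x, gaussianDensity S x ^ 2 := by
  set m : ι → ℝ := (1 / 2 : ℝ) • (y + z) with hm
  set δ : ι → ℝ := (1 / 2 : ℝ) • (y - z) with hδ
  have hy (x : ι → ℝ) : x - y = x - m - δ := by rw [hm, hδ]; module
  have hz (x : ι → ℝ) : x - z = x - m + δ := by rw [hm, hδ]; module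
  have hquad : δ ⬝ᵥ S⁻¹ *ᵥ δ = (y - z) ⬝ᵥ S⁻¹ *ᵥ (y - z) / 4 := by
    simp only [hδ, mulVec_smul, smul_dotProduct, dotProduct_smul, smul_eq_mul]
    ring
  calc ∫ x, gaussianDensity S (x - y) * gaussianDensity S (x - z)
      = ∫ x, Real.exp (-(δ ⬝ᵥ S⁻¹ *ᵥ δ)) * gaussianDensity S (x - m) ^ 2 := by
        congr! 2 with x
        rw [hy, hz, mul_comm, gaussianDensity_add_mul_gaussianDensity_sub]
    _ = Real.exp (-((y - z) ⬝ᵥ S⁻¹ *ᵥ (y - z)) / 4) * ∫ x, gaussianDensity S x ^ 2 := by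
        rw [integral_const_mul, integral_sub_right_eq_self (fun x ↦ gaussianDensity S x ^ 2) m,
          hquad, neg_div]

lemma integral_gaussianDensity_sq (hS : S.PosDef) :
    ∫ x, gaussianDensity S x ^ 2 = 1 / √((4 * Real.pi) ^ Fintype.card ι * S.det) := by
  have hdet := hS.det_pos
  have hsq (x : ι → ℝ) : gaussianDensity S x ^ 2
      = Real.exp (-(x ⬝ᵥ S⁻¹ *ᵥ x)) / ((2 * Real.pi) ^ Fintype.card ι * S.det) := by
    rw [gaussianDensity, div_pow, Real.sq_sqrt (by positivity), ← Real.exp_nat_mul]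
    congr 2
    push_cast
    ring
  have hroots : √(Real.pi ^ Fintype.card ι * S.det) * √((4 * Real.pi) ^ Fintype.card ι * S.det)
      = (2 * Real.pi) ^ Fintype.card ι * S.det := by
    rw [← Real.sqrt_mul (by positivity), Real.sqrt_eq_iff_mul_self_eq (by positivity)
      (by positivity), show (4 : ℝ) = 2 * 2 by norm_num]
    simp only [mul_pow]
    ring
  simp_rw [hsq]
  rw [integral_div, integral_exp_neg_dotProduct_mulVec hS.inv, det_nonsing_inv,
    Ring.inverse_eq_inv', div_inv_eq_mul, div_eq_div_iff (by positivity) (by positivity), one_mul,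
    hroots]

lemma memLp_two_gaussianDensity (hS : S.PosDef) : MemLp (gaussianDensity S) 2 := by
  have hdet := hS.det_pos
  rw [memLp_two_iff_integrable_sq (continuous_gaussianDensity S).aestronglyMeasurable]
  exact .of_integral_ne_zero (by rw [integral_gaussianDensity_sq hS]; positivity)

lemma eLpNorm_gaussianDensity_translate_sub_translate (hS : S.PosDef) (y z : ι → ℝ) :
    eLpNorm (fun x ↦ gaussianDensity S (x - y) - gaussianDensity S (x - z)) 2 volume
      = ENNReal.ofReal √(2 * (1 - Real.exp (-((y - z) ⬝ᵥ S⁻¹ *ᵥ (y - z)) / 4))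
          / √((4 * Real.pi) ^ Fintype.card ι * S.det)) := by
  have hK := memLp_two_gaussianDensity hS
  have hsub : MemLp (fun x ↦ gaussianDensity S (x - y) - gaussianDensity S (x - z)) 2 :=
    (memLp_comp_sub_right hK y).sub (memLp_comp_sub_right hK z)
  rw [eLpNorm_two_eq_ofReal_sqrt_integral_sq hsub]
  simp_rw [Real.norm_eq_abs, sq_abs]
  rw [integral_sq_translate_sub_translate hK, integral_gaussianDensity_translate_mul_translate,
    integral_gaussianDensity_sq hS]
  ring_nf

end GaussianDensity

open Matrix in
theorem gaussian_translates_lipschitz_L2_general {ι : Type*} [Fintype ι] [DecidableEq ι]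
    {S : Matrix ι ι ℝ} (hS : S.PosDef) (y z : ι → ℝ) :
    eLpNorm (fun x ↦ gaussianDensity S (x - y) - gaussianDensity S (x - z)) 2 volume
      ≤ ENNReal.ofReal
          (√‖toEuclideanCLM (𝕜 := ℝ) S⁻¹‖
              / (√2 * (4 * Real.pi) ^ ((Fintype.card ι : ℝ) / 4) * S.det ^ ((1 : ℝ) / 4))
            * ‖WithLp.toLp 2 (y - z)‖) := by
  rw [eLpNorm_gaussianDensity_translate_sub_translate hS, mul_assoc √2,
    ← sqrt_sqrt_pow_mul (by positivity) hS.det_pos.le]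
  set q := (y - z) ⬝ᵥ S⁻¹ *ᵥ (y - z)
  set w := √((4 * Real.pi) ^ Fintype.card ι * S.det)
  set N := ‖toEuclideanCLM (𝕜 := ℝ) S⁻¹‖
  set d := ‖WithLp.toLp 2 (y - z)‖
  have hexp : 1 - Real.exp (-q / 4) ≤ q / 4 := by linarith [Real.add_one_le_exp (-q / 4)]
  have hq : q ≤ N * (d * d) := dotProduct_mulVec_le_norm_toEuclideanCLM S⁻¹ (y - z) (y - z)
  refine ENNReal.ofReal_le_ofReal ?_
  calc √(2 * (1 - Real.exp (-q / 4)) / w)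
      ≤ √(2 * (N * (d * d) / 4) / w) := by gcongr; linarith
    _ = √(N / (2 * w) * d ^ 2) := by ring_nf
    _ = √N / (√2 * √w) * d := by
        rw [Real.sqrt_mul (by positivity), Real.sqrt_sq (norm_nonneg _),
          Real.sqrt_div (norm_nonneg _), Real.sqrt_mul zero_le_two]

open Matrix in
/-- the translates of a centered Gaussian density with covariance Σ are
c-Lipschitz in L², with c = ‖Σ⁻¹‖₂^{1/2} / (√2 · π^{n/4} · det(Σ)^{1/4}). -/
theorem gaussian_translates_lipschitz_L2 {n : ℕ}
    (S : Matrix (Fin n) (Fin n) ℝ) (hS : S.PosDef)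
    (K : (Fin n → ℝ) → ℝ)
    (hK : K = fun x => Real.exp (-(1/2) * (x ⬝ᵥ S⁻¹ *ᵥ x))
        / Real.sqrt ((2 * Real.pi) ^ n * S.det))
    (y z : Fin n → ℝ) :
    eLpNorm (fun x => K (x - y) - K (x - z)) 2 (volume : Measure (Fin n → ℝ))
      ≤ ENNReal.ofReal
          ((Real.sqrt ‖Matrix.toEuclideanCLM (𝕜 := ℝ) S⁻¹‖
              / (Real.sqrt 2 * Real.pi ^ ((n : ℝ) / 4) * S.det ^ ((1 : ℝ) / 4)))
            * lpnorm 2 (y - z)) := by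
  obtain rfl : K = gaussianDensity S := funext fun x ↦ by simp [hK, gaussianDensity]
  have hdet := hS.det_pos
  have hpi : Real.pi ≤ 4 * Real.pi := by linarith [Real.pi_pos]
  refine (gaussian_translates_lipschitz_L2_general hS y z).trans (ENNReal.ofReal_le_ofReal ?_)
  rw [Fintype.card_fin]
  change _ ≤ _ * ‖WithLp.toLp 2 (y - z)‖
  gcongr
end

section
/- Let K : ℝⁿ → ℝ be an a-Lipschitz function (with respect to the Euclidean norm) with compact support. Then for all y, z ∈ ℝⁿ, ‖K_y − K_z‖_{L²} ≤ c · ‖y − z‖_2 with c = a · (2 · |supp(K)|)^{1/2}, where K_y(x) = K(x − y) and |supp(K)| denotes the Lebesgue measure of the support of K. -/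
open MeasureTheory

/-!
The difference `K_y - K_z` is bounded everywhere by `a * ‖y - z‖` and vanishes off the union of two
translates of `supp K`. Translation invariance bounds the volume of that union by `2 * |supp K|`.
-/

section Translates

variable {G F : Type*} [MeasurableSpace G] {μ : Measure G}

lemma eLpNorm_le_mul_measure_support [TopologicalSpace F] [ENormedAddMonoid F] {f : G → F}
    {C : ENNReal} (hf : ∀ x, ‖f x‖ₑ ≤ C) (p : ENNReal) :
    eLpNorm f p μ ≤ C * μ (Function.support f) ^ p.toReal⁻¹ := by
  rw [← eLpNorm_restrict_eq_of_support_subset subset_rfl, ← smul_eq_mul,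
    ← Measure.restrict_apply_univ (Function.support f)]
  exact eLpNorm_le_of_ae_enorm_bound (.of_forall hf)

lemma measure_support_comp_sub_right [AddGroup G] [MeasurableAdd G] [μ.IsAddRightInvariant]
    [Zero F] (f : G → F) (y : G) :
    μ (Function.support fun x => f (x - y)) = μ (Function.support f) := by
  simp only [sub_eq_add_neg]
  exact measure_preimage_add_right μ (-y) (Function.support f)

lemma measure_support_translate_sub_translate_le [AddGroup G] [MeasurableAdd G]
    [μ.IsAddRightInvariant] [SubtractionMonoid F] (f g : G → F) (y z : G) :
    μ (Function.support fun x => f (x - y) - g (x - z))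
      ≤ μ (Function.support f) + μ (Function.support g) :=
  calc
    _ ≤ μ ((Function.support fun x => f (x - y)) ∪ Function.support fun x => g (x - z)) :=
      measure_mono (Function.support_sub _ _)
    _ ≤ _ := measure_union_le _ _
    _ = _ := by simp only [measure_support_comp_sub_right]

variable [AddCommGroup G] [MeasurableAdd G] [μ.IsAddRightInvariant] [NormedAddCommGroup F]
  {K : G → F}

lemma eLpNorm_translate_sub_translate_le {ω : G → ENNReal}
    (hω : ∀ u v, ‖K u - K v‖ₑ ≤ ω (u - v)) (p : ENNReal) (y z : G) :
    eLpNorm (fun x => K (x - y) - K (x - z)) p μ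
      ≤ ω (y - z) * (2 * μ (Function.support K)) ^ p.toReal⁻¹ := by
  have hbound (x : G) : ‖K (x - y) - K (x - z)‖ₑ ≤ ω (y - z) := by
    simpa only [enorm_sub_rev, sub_sub_sub_cancel_left] using hω (x - z) (x - y)
  refine (eLpNorm_le_mul_measure_support hbound p).trans ?_
  gcongr
  exact (measure_support_translate_sub_translate_le K K y z).trans_eq (two_mul _).symm

theorem lipschitz_compact_support_translates_lipschitz_L2_general {a : ℝ} {ρ : G → ℝ}
    (hlip : ∀ u v, ‖K u - K v‖ ≤ a * ρ (u - v)) (hsupp : μ (Function.support K) ≠ ⊤)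
    (p : ENNReal) (y z : G) :
    eLpNorm (fun x => K (x - y) - K (x - z)) p μ
      ≤ ENNReal.ofReal
          ((a * (2 * (μ (Function.support K)).toReal) ^ p.toReal⁻¹) * ρ (y - z)) := by
  have hω (u v : G) : ‖K u - K v‖ₑ ≤ ENNReal.ofReal (a * ρ (u - v)) := by
    simpa only [ofReal_norm] using ENNReal.ofReal_le_ofReal (hlip u v)
  calc
    _ ≤ ENNReal.ofReal (a * ρ (y - z)) * (2 * μ (Function.support K)) ^ p.toReal⁻¹ :=
      eLpNorm_translate_sub_translate_le (ω := fun v => ENNReal.ofReal (a * ρ v)) hω p y z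
    _ = ENNReal.ofReal (a * ρ (y - z))
          * ENNReal.ofReal ((2 * (μ (Function.support K)).toReal) ^ p.toReal⁻¹) := by
      rw [← ENNReal.ofReal_rpow_of_nonneg (by positivity) (by positivity),
        ENNReal.ofReal_mul zero_le_two, ENNReal.ofReal_toReal hsupp, ENNReal.ofReal_ofNat]
    _ = _ := by
      rw [← ENNReal.ofReal_mul ((norm_nonneg _).trans (hlip y z)), mul_right_comm]

end Translates

lemma measure_support_ne_top_of_hasCompactSupport {X F : Type*} [TopologicalSpace X]
    [MeasurableSpace X] {μ : Measure X} [IsFiniteMeasureOnCompacts μ] [Zero F] {f : X → F}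
    (hf : HasCompactSupport f) : μ (Function.support f) ≠ ⊤ :=
  measure_ne_top_of_subset (subset_tsupport f) hf.isCompact.measure_ne_top

/-- the translates of an a-Lipschitz (w.r.t. the Euclidean norm) compactly
supported kernel K are c-Lipschitz in L², with c = a·(2·|supp K|)^{1/2}. -/
theorem lipschitz_compact_support_translates_lipschitz_L2 {n : ℕ}
    (K : (Fin n → ℝ) → ℝ) (a : ℝ)
    (hlip : ∀ u v : Fin n → ℝ, |K u - K v| ≤ a * lpnorm 2 (u - v))
    (hsupp : HasCompactSupport K)
    (y z : Fin n → ℝ) :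
    eLpNorm (fun x => K (x - y) - K (x - z)) 2 (volume : Measure (Fin n → ℝ))
      ≤ ENNReal.ofReal
          ((a * Real.sqrt (2 * ((volume : Measure (Fin n → ℝ)) (Function.support K)).toReal))
            * lpnorm 2 (y - z)) := by
  simpa [Real.sqrt_eq_rpow] using lipschitz_compact_support_translates_lipschitz_L2_general
    hlip (measure_support_ne_top_of_hasCompactSupport hsupp) 2 y z
end
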